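/- Let h ~ Exp(1), γ₀ > 0, and ζ ≥ 0 a fixed constant, with γ = h/(1/γ₀ + ζ). Then E[V(γ)] = ∫₀^{(log₂ e)²/2} exp(−(1/γ₀ + ζ)·(√(1/(1 − 2v/(log₂ e)²)) − 1)) dv. -/

import Mathlib

open MeasureTheory

theorem average_dispersion
    {Ω : Type*} [MeasureSpace Ω] (μ : Measure Ω) [IsProbabilityMeasure μ]
    (h : Ω → ℝ) (hmeas : Measurable h)
    (hCDF : ∀ t : ℝ, 0 ≤ t → μ {ω | h ω ≤ t} = ENNReal.ofReal (1 - Real.exp (-t)))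
    (γ₀ ζ : ℝ) (hγ₀ : 0 < γ₀) (hζ : 0 ≤ ζ)
    (γ : Ω → ℝ) (hγ : ∀ ω, γ ω = h ω / (1 / γ₀ + ζ)) :
    ∫ ω, ((Real.logb 2 (Real.exp 1)) ^ 2 / 2) * (1 - 1 / (γ ω + 1) ^ 2) ∂μ =
      ∫ v in Set.Ioo (0 : ℝ) ((Real.logb 2 (Real.exp 1)) ^ 2 / 2),
        Real.exp (-(1 / γ₀ + ζ) *
          (Real.sqrt (1 / (1 - 2 * v / (Real.logb 2 (Real.exp 1)) ^ 2)) - 1)) := by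
  have ha : 0 < 1 / γ₀ + ζ := by positivity
  generalize 1 / γ₀ + ζ = a at *
  have hL : 0 < Real.logb 2 (Real.exp 1) :=
    Real.logb_pos (by norm_num) (by simp)
  generalize Real.logb 2 (Real.exp 1) = L at *
  have hγm : Measurable γ := by
    have : γ = fun ω => h ω / a := funext hγ
    rw [this]; exact hmeas.div_const a
  have hpos : ∀ᵐ ω ∂μ, 0 < h ω := by
    rw [ae_iff]
    have := hCDF 0 le_rfl
    simpa using this
  have hγpos : ∀ᵐ ω ∂μ, 0 < γ ω := by
    filter_upwards [hpos] with ω hω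
    rw [hγ]; positivity
  have hK : 0 < L ^ 2 / 2 := by positivity
  have hbd : ∀ x : ℝ, 0 < x → 0 < 1 / (x + 1) ^ 2 ∧ 1 / (x + 1) ^ 2 ≤ 1 := by
    intro x hx
    refine ⟨by positivity, ?_⟩
    rw [div_le_one (by positivity)]
    nlinarith
  have hnn : 0 ≤ᵐ[μ] fun ω => L ^ 2 / 2 * (1 - 1 / (γ ω + 1) ^ 2) := by
    filter_upwards [hγpos] with ω hω
    have := hbd _ hω
    exact mul_nonneg hK.le (by linarith)
  have hint : Integrable (fun ω => L ^ 2 / 2 * (1 - 1 / (γ ω + 1) ^ 2)) μ := by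
    refine Integrable.of_bound (C := L ^ 2 / 2) ?_ ?_
    · exact (by fun_prop : Measurable fun ω => L ^ 2 / 2 * (1 - 1 / (γ ω + 1) ^ 2)).aestronglyMeasurable
    · filter_upwards [hγpos, hnn] with ω hω h0
      rw [Real.norm_of_nonneg h0]
      have := hbd _ hω
      nlinarith
  rw [hint.integral_eq_integral_meas_lt hnn]
  rw [setIntegral_eq_of_subset_of_forall_sdiff_eq_zero measurableSet_Ioi
    (Set.Ioo_subset_Ioi_self : Set.Ioo (0:ℝ) (L ^ 2 / 2) ⊆ Set.Ioi 0)]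
  · refine setIntegral_congr_fun measurableSet_Ioo ?_
    rintro v ⟨hv0, hv1⟩
    dsimp only
    have hw0 : 0 < 1 - 2 * v / L ^ 2 := by
      rw [sub_pos, div_lt_one (by positivity)]; linarith
    have hw1 : 1 - 2 * v / L ^ 2 ≤ 1 := by
      have : 0 ≤ 2 * v / L ^ 2 := by positivity
      linarith
    have hvw : v = L ^ 2 / 2 * (1 - (1 - 2 * v / L ^ 2)) := by field_simp; ring
    generalize 1 - 2 * v / L ^ 2 = w at *
    have hs : 1 ≤ Real.sqrt (1 / w) := by
      rw [Real.one_le_sqrt, le_div_iff₀ hw0]; linarith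
    have hcongr : {ω | v < L ^ 2 / 2 * (1 - 1 / (γ ω + 1) ^ 2)} =ᵐ[μ]
        ({ω | h ω ≤ a * (Real.sqrt (1 / w) - 1)}ᶜ : Set Ω) := by
      filter_upwards [hγpos] with ω hω
      refine propext ?_
      change v < L ^ 2 / 2 * (1 - 1 / (γ ω + 1) ^ 2) ↔ ¬ (h ω ≤ a * (Real.sqrt (1 / w) - 1))
      have hh : h ω = a * γ ω := by rw [hγ]; field_simp
      rw [hh, hvw, mul_lt_mul_iff_right₀ hK, mul_le_mul_iff_right₀ ha, not_le, sub_lt_sub_iff_left,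
        sub_lt_iff_lt_add, Real.sqrt_lt' (by positivity), one_div_lt (by positivity) hw0]
    have ht : 0 ≤ a * (Real.sqrt (1 / w) - 1) := mul_nonneg ha.le (by linarith)
    rw [measureReal_congr hcongr,
      probReal_compl_eq_one_sub (measurableSet_le hmeas measurable_const), measureReal_def,
      hCDF _ ht, ENNReal.toReal_ofReal]
    · rw [neg_mul]; ring
    · simpa using ht
  · rintro v ⟨hv0, hv1⟩
    have hv : L ^ 2 / 2 ≤ v := by
      by_contra hc
      exact hv1 ⟨hv0, not_le.mp hc⟩
    rw [measureReal_def, (measure_eq_zero_iff_ae_notMem.mpr ?_ : μ _ = 0), ENNReal.toReal_zero]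
    filter_upwards [hγpos] with ω hω
    have := hbd _ hω
    simp only [Set.mem_setOf_eq, not_lt]
    nlinarith
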